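/- Let K be a weak-star compact subset of the space of finite signed regular Borel measures on a compact metric space X, symmetric about 0 and convex. Suppose Y is an (M+1)-dimensional subspace of measures and ρ > 0 is such that every μ ∈ Y with |||μ||| ≤ ρ lies in K, where |||·||| is a norm on measures continuous with respect to weak-star convergence on bounded sets. Then for every continuous map S : K → ℝ^M and every map A : ℝ^M → (measures), one has sup_{μ ∈ K} |||A(S(μ)) − μ||| ≥ ρ. -/

import Mathlib

open MeasureTheory

/-- Integral of a function against a finite signed measure, via the Jordan decomposition. -/
noncomputable def sint {X : Type*} [MeasurableSpace X] (s : SignedMeasure X) (f : X → ℝ) : ℝ :=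
  (∫ x, f x ∂s.toJordanDecomposition.posPart) - ∫ x, f x ∂s.toJordanDecomposition.negPart

/-- The weak-star topology on finite signed Borel measures, induced by duality with
continuous functions. -/
noncomputable def wstar (X : Type*) [MeasurableSpace X] [TopologicalSpace X] :
    TopologicalSpace (SignedMeasure X) :=
  TopologicalSpace.induced (fun s => fun g : C(X, ℝ) => sint s (fun x => g x)) inferInstance

namespace BU

theorem even_of_invol {α : Type*} (s : Finset α) (f : α → α)
    (h1 : ∀ x ∈ s, f x ∈ s) (h2 : ∀ x ∈ s, f (f x) = x) (h3 : ∀ x ∈ s, f x ≠ x) :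
    Even s.card := by
  have : ∑ _x ∈ s, (1 : ZMod 2) = 0 :=
    Finset.sum_involution (fun a _ => f a) (fun _ _ => by decide)
      (fun a ha _ => h3 a ha) (fun a ha => h1 a ha) (fun a ha => h2 a ha)
  rw [Finset.sum_const, nsmul_eq_mul, mul_one] at this
  exact (ZMod.natCast_eq_zero_iff_even).1 this

abbrev Lab (n : ℕ) := Fin n × Bool
abbrev Pt (n : ℕ) := Fin n → ℤ

def sg {n : ℕ} (a : Lab n) : ℤ := if a.2 then 1 else -1
def dir {n : ℕ} (a : Lab n) : Pt n := Pi.single a.1 (sg a)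
def ng {n : ℕ} (a : Lab n) : Lab n := (a.1, !a.2)

theorem sg_mul {n : ℕ} (a : Lab n) : sg a * sg a = 1 := by
  unfold sg; split <;> rfl
theorem sg_ng {n : ℕ} (a : Lab n) : sg (ng a) = - sg a := by
  rcases a with ⟨i, b⟩; cases b <;> simp [sg, ng]
theorem dir_ng {n : ℕ} (a : Lab n) : dir (ng a) = - dir a := by
  unfold dir; rw [sg_ng]; simp [ng, Pi.single_neg]
theorem ng_ng {n : ℕ} (a : Lab n) : ng (ng a) = a := by simp [ng]
theorem ng_ne {n : ℕ} (a : Lab n) : ng a ≠ a := by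
  rcases a with ⟨i, b⟩; cases b <;> simp [ng]
theorem sg_dir {n : ℕ} (a : Lab n) : sg a * dir a a.1 = 1 := by simp [dir, sg_mul]
theorem dir_ne {n : ℕ} (a : Lab n) (i : Fin n) (h : i ≠ a.1) : dir a i = 0 := by
  simp [dir, h]
theorem eq_or_ng {n : ℕ} (a b : Lab n) (h : a.1 = b.1) : a = b ∨ a = ng b := by
  rcases a with ⟨i, x⟩; rcases b with ⟨j, y⟩
  simp only at h; subst h
  cases x <;> cases y <;> simp [ng]

/-- vertex -/
def vx {n : ℕ} (w : Pt n) (l : List (Lab n)) (m : ℕ) : Pt n := w + ((l.take m).map dir).sum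

/-- swap entries -/
def sw {α : Type*} : ℕ → List α → List α
  | 0, a :: b :: t => b :: a :: t
  | (i+1), a :: t => a :: sw i t
  | _, l => l

theorem sw_sw {α : Type*} (i : ℕ) (l : List α) : sw i (sw i l) = l := by
  induction i generalizing l with
  | zero => rcases l with _ | ⟨a, _ | ⟨b, t⟩⟩ <;> rfl
  | succ i ih => rcases l with _ | ⟨a, t⟩
                 · rfl
                 · simp [sw, ih]

theorem sw_perm {α : Type*} (i : ℕ) (l : List α) : (sw i l).Perm l := by
  induction i generalizing l with
  | zero =>
    rcases l with _ | ⟨a, _ | ⟨b, t⟩⟩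
    · exact List.Perm.refl _
    · exact List.Perm.refl _
    · exact List.Perm.swap _ _ _
  | succ i ih => rcases l with _ | ⟨a, t⟩
                 · exact List.Perm.refl _
                 · exact (ih t).cons a

theorem sw_ne {α : Type*} (i : ℕ) (l : List α) (hl : l.Nodup) (h : i + 1 < l.length) :
    sw i l ≠ l := by
  induction i generalizing l with
  | zero =>
    rcases l with _ | ⟨a, _ | ⟨b, t⟩⟩
    · simp at h
    · simp at h
    · simp only [sw]
      intro hh
      simp at hh hl
      exact hl.1.1 hh.2
  | succ i ih => rcases l with _ | ⟨a, t⟩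
                 · simp at h
                 · simp only [sw]
                   intro hh
                   simp at hh hl h
                   exact ih t hl.2 h hh

theorem sw_take {n : ℕ} (i m : ℕ) (l : List (Lab n)) (hm : m ≠ i + 1) :
    (((sw i l).take m).map dir).sum = ((l.take m).map dir).sum := by
  induction i generalizing l m with
  | zero =>
    rcases l with _ | ⟨a, _ | ⟨b, t⟩⟩
    · rfl
    · rfl
    · rcases m with _ | _ | m
      · simp
      · simp at hm
      · simp [sw]; abel
  | succ i ih => rcases l with _ | ⟨a, t⟩
                 · rfl
                 · rcases m with _ | m
                   · simp
                   · simp only [sw, List.take_succ_cons, List.map_cons, List.sum_cons]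
                     rw [ih]; omega

theorem sum_dir {n : ℕ} (l : List (Lab n)) (hl : (l.map Prod.fst).Nodup) :
    (∀ i, i ∉ l.map Prod.fst → (l.map dir).sum i = 0) ∧
    (∀ a ∈ l, sg a * (l.map dir).sum a.1 = 1) := by
  induction l with
  | nil => simp
  | cons b t ih =>
    rw [List.map_cons, List.nodup_cons] at hl
    obtain ⟨ih1, ih2⟩ := ih hl.2
    constructor
    · intro i hi
      simp only [List.map_cons, List.mem_cons, not_or] at hi
      simp only [List.map_cons, List.sum_cons, Pi.add_apply]
      rw [ih1 i hi.2, dir_ne b i hi.1, add_zero]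
    · intro a ha
      simp only [List.map_cons, List.sum_cons, Pi.add_apply]
      rcases List.mem_cons.1 ha with rfl | ha
      · rw [ih1 _ hl.1, add_zero, sg_dir]
      · have : a.1 ≠ b.1 := fun h => hl.1 (h ▸ List.mem_map_of_mem ha)
        rw [dir_ne _ _ this, zero_add, ih2 a ha]

/-- valid simplex -/
structure Val {n : ℕ} (k : ℕ) (w : Pt n) (l : List (Lab n)) : Prop where
  nd : (l.map Prod.fst).Nodup
  lo : ∀ a ∈ l, 0 ≤ sg a * w a.1
  hi : ∀ a ∈ l, sg a * w a.1 + 1 ≤ k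
  z : ∀ i, i ∉ l.map Prod.fst → w i = 0

theorem Val.perm {n k : ℕ} {w : Pt n} {l l' : List (Lab n)} (h : Val k w l) (hp : l'.Perm l) :
    Val k w l' :=
  ⟨((hp.map Prod.fst).nodup_iff).2 h.nd, fun a ha => h.lo a (hp.mem_iff.1 ha),
   fun a ha => h.hi a (hp.mem_iff.1 ha),
   fun i hi => h.z i (fun hmem => hi ((hp.map Prod.fst).mem_iff.2 hmem))⟩

/-- coordinates of the vertices -/
theorem vx_coord {n : ℕ} (w : Pt n) (l : List (Lab n)) (hl : (l.map Prod.fst).Nodup) (m : ℕ) :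
    (∀ i, i ∉ l.map Prod.fst → vx w l m i = w i) ∧
    (∀ a ∈ l, sg a * vx w l m a.1 = sg a * w a.1 ∨ sg a * vx w l m a.1 = sg a * w a.1 + 1) := by
  have hsub : ((l.take m).map Prod.fst).Sublist (l.map Prod.fst) :=
    (List.take_sublist m l).map _
  obtain ⟨h1, h2⟩ := sum_dir (l.take m) (hl.sublist hsub)
  constructor
  · intro i hi
    simp only [vx, Pi.add_apply]
    rw [h1 i (fun h => hi (hsub.subset h)), add_zero]
  · intro a ha
    simp only [vx, Pi.add_apply, mul_add]
    by_cases hm : a ∈ l.take m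
    · right; rw [h2 a hm]
    · left
      rw [h1 a.1, mul_zero, add_zero]
      intro hh
      obtain ⟨b, hb, hba⟩ := List.mem_map.1 hh
      have := List.inj_on_of_nodup_map hl (List.mem_of_mem_take hb) ha hba
      exact hm (this ▸ hb)

theorem vx_adj {n k : ℕ} {w : Pt n} {l : List (Lab n)} (h : Val k w l) (m m' : ℕ) (i : Fin n) :
    |vx w l m i - vx w l m' i| ≤ 1 := by
  by_cases hi : i ∈ l.map Prod.fst
  · obtain ⟨a, ha, rfl⟩ := List.mem_map.1 hi
    have h1 := (vx_coord w l h.nd m).2 a ha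
    have h2 := (vx_coord w l h.nd m').2 a ha
    have : |sg a * vx w l m a.1 - sg a * vx w l m' a.1| ≤ 1 := by
      rw [abs_le]; constructor <;> omega
    rw [← mul_sub, abs_mul] at this
    have hs : |sg a| = 1 := by unfold sg; split <;> simp
    rwa [hs, one_mul] at this
  · rw [(vx_coord w l h.nd m).1 i hi, (vx_coord w l h.nd m').1 i hi]; simp

theorem vx_bd {n k : ℕ} {w : Pt n} {l : List (Lab n)} (h : Val k w l) (m : ℕ) (i : Fin n) :
    |vx w l m i| ≤ k := by
  by_cases hi : i ∈ l.map Prod.fst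
  · obtain ⟨a, ha, rfl⟩ := List.mem_map.1 hi
    have h1 := (vx_coord w l h.nd m).2 a ha
    have h2 := h.lo a ha
    have h3 := h.hi a ha
    have : |sg a * vx w l m a.1| ≤ k := by
      rw [abs_le]; constructor <;> omega
    rw [abs_mul] at this
    have hs : |sg a| = 1 := by unfold sg; split <;> simp
    rwa [hs, one_mul] at this
  · rw [(vx_coord w l h.nd m).1 i hi, h.z i hi]; simp

theorem vx_zero {n : ℕ} (w : Pt n) (l : List (Lab n)) : vx w l 0 = w := by simp [vx]

theorem vx_rot {n : ℕ} (w : Pt n) (a : Lab n) (t : List (Lab n)) (m : ℕ) (hm : m ≤ t.length) :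
    vx (w + dir a) (t ++ [a]) m = vx w (a :: t) (m + 1) := by
  simp [vx, List.take_append_of_le_length hm, add_assoc]

theorem vx_app {n : ℕ} (w : Pt n) (a : Lab n) (t : List (Lab n)) (m : ℕ) (hm : m ≤ t.length) :
    vx w (t ++ [a]) m = vx w t m := by
  simp [vx, List.take_append_of_le_length hm]

theorem vx_neg {n : ℕ} (w : Pt n) (l : List (Lab n)) (m : ℕ) :
    vx (-w) (l.map ng) m = - vx w l m := by
  have : ∀ t : List (Lab n), ((t.map ng).map dir).sum = - (t.map dir).sum := by
    intro t
    induction t with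
    | nil => simp
    | cons a t ih => simp only [List.map_cons, List.sum_cons, ih, dir_ng]; abel
  simp only [vx, ← List.map_take, this]; abel

theorem val_finite {n : ℕ} (k d : ℕ) : {p : Pt n × List (Lab n) | Val k p.1 p.2 ∧ p.2.length = d}.Finite := by
  refine ((Set.finite_Icc (fun _ => -(k:ℤ)) (fun _ => (k:ℤ))).prod
    (List.finite_length_eq (Lab n) d)).subset ?_
  rintro ⟨w, l⟩ ⟨h, hd⟩
  refine ⟨⟨fun i => ?_, fun i => ?_⟩, hd⟩
  · have := vx_bd h 0 i
    rw [vx_zero] at this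
    exact (abs_le.1 this).1
  · have := vx_bd h 0 i
    rw [vx_zero] at this
    exact (abs_le.1 this).2
end BU
namespace BU

theorem parity_step {α β : Type*} (S : Finset α) (E : Finset β) (P : α → Prop) [DecidablePred P]
    (f : α → α) (h1 : ∀ x ∈ S, ¬ P x → f x ∈ S) (h1' : ∀ x ∈ S, ¬ P x → ¬ P (f x))
    (h2 : ∀ x ∈ S, ¬ P x → f (f x) = x) (h3 : ∀ x ∈ S, ¬ P x → f x ≠ x)
    (hE : (S.filter P).card = E.card) : Even S.card ↔ Even E.card := by
  have hev : Even (S.filter (fun x => ¬ P x)).card := by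
    apply even_of_invol _ f
    · intro x hx
      rw [Finset.mem_filter] at hx ⊢
      exact ⟨h1 x hx.1 hx.2, h1' x hx.1 hx.2⟩
    · intro x hx
      rw [Finset.mem_filter] at hx
      exact h2 x hx.1 hx.2
    · intro x hx
      rw [Finset.mem_filter] at hx
      exact h3 x hx.1 hx.2
  rw [← Finset.card_filter_add_card_filter_not (s := S) P, hE, Nat.even_add]
  simp [hev]

def Om {n : ℕ} (k : ℕ) (lam : Pt n → Lab n) (d : ℕ) : Set (Pt n × List (Lab n) × ℕ) :=
  {p | Val k p.1 p.2.1 ∧ p.2.1.length = d ∧ p.2.2 ≤ d ∧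
    ∀ a ∈ p.2.1, ∃ m ≤ d, m ≠ p.2.2 ∧ lam (vx p.1 p.2.1 m) = a}

def En {n : ℕ} (k : ℕ) (lam : Pt n → Lab n) (d : ℕ) : Set (Pt n × List (Lab n) × Lab n) :=
  {p | Val k p.1 p.2.1 ∧ p.2.1.length = d ∧ p.2.2.1 ∉ p.2.1.map Prod.fst ∧
    ∀ a ∈ p.2.2 :: p.2.1, ∃ m ≤ d, lam (vx p.1 p.2.1 m) = a}

theorem Om_finite {n : ℕ} (k : ℕ) (lam : Pt n → Lab n) (d : ℕ) : (Om k lam d).Finite := by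
  refine (((val_finite (n := n) k d).prod (Set.finite_Iic d)).image
    (fun q => (q.1.1, q.1.2, q.2))).subset ?_
  rintro ⟨w, l, i⟩ ⟨h, hd, hi, -⟩
  exact ⟨((w, l), i), ⟨⟨h, hd⟩, hi⟩, rfl⟩

theorem En_finite {n : ℕ} (k : ℕ) (lam : Pt n → Lab n) (d : ℕ) : (En k lam d).Finite := by
  refine (((val_finite (n := n) k d).prod (Set.finite_univ (α := Lab n))).image
    (fun q => (q.1.1, q.1.2, q.2))).subset ?_
  rintro ⟨w, l, i⟩ ⟨h, hd, hi, -⟩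
  exact ⟨((w, l), i), ⟨⟨h, hd⟩, trivial⟩, rfl⟩

theorem Om_aux {n k d : ℕ} {lam : Pt n → Lab n} {w : Pt n} {l : List (Lab n)} {i : ℕ}
    (h : (w, l, i) ∈ Om k lam d) :
    (∀ m ≤ d, m ≠ i → lam (vx w l m) ∈ l) ∧
    (∀ m ≤ d, m ≠ i → ∀ m' ≤ d, m' ≠ i → lam (vx w l m) = lam (vx w l m') → m = m') := by
  classical
  obtain ⟨hv, hd, hi, hl⟩ := h
  simp only at hv hd hi hl
  set s := (Finset.range (d+1)).erase i with hs
  have hms : ∀ m, m ∈ s ↔ m ≤ d ∧ m ≠ i := by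
    intro m; simp only [hs, Finset.mem_erase, Finset.mem_range]; omega
  have hsc : s.card = d := by
    rw [hs, Finset.card_erase_of_mem (by simp; omega)]; simp
  have hlc : l.toFinset.card = d := by
    rw [List.toFinset_card_of_nodup (List.Nodup.of_map _ hv.nd), hd]
  have hsub : l.toFinset ⊆ s.image (fun m => lam (vx w l m)) := by
    intro a ha
    obtain ⟨m, hm, hmi, hma⟩ := hl a (List.mem_toFinset.1 ha)
    exact Finset.mem_image.2 ⟨m, (hms m).2 ⟨hm, hmi⟩, hma⟩
  have hle : (s.image (fun m => lam (vx w l m))).card ≤ s.card := Finset.card_image_le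
  have heq : l.toFinset = s.image (fun m => lam (vx w l m)) :=
    Finset.eq_of_subset_of_card_le hsub (by omega)
  have hinj : Set.InjOn (fun m => lam (vx w l m)) s := by
    rw [← Finset.card_image_iff, ← heq]; omega
  refine ⟨fun m hm hmi => ?_, fun m hm hmi m' hm' hmi' e => ?_⟩
  · rw [← List.mem_toFinset, heq]
    exact Finset.mem_image_of_mem _ ((hms m).2 ⟨hm, hmi⟩)
  · exact hinj (Finset.mem_coe.2 ((hms m).2 ⟨hm, hmi⟩)) (Finset.mem_coe.2 ((hms m').2 ⟨hm', hmi'⟩)) e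

open Classical in
noncomputable def psi {n : ℕ} (lam : Pt n → Lab n) (d : ℕ) (p : Pt n × List (Lab n) × ℕ) :
    Pt n × List (Lab n) × ℕ :=
  if h : ∃ m ≤ d, m ≠ p.2.2 ∧ lam (vx p.1 p.2.1 m) = lam (vx p.1 p.2.1 p.2.2) then
    (p.1, p.2.1, h.choose) else p

theorem psi_spec {n k d : ℕ} {lam : Pt n → Lab n} {w : Pt n} {l : List (Lab n)} {i : ℕ}
    (h : (w, l, i) ∈ Om k lam d) (m : ℕ) (hm : m ≤ d) (hmi : m ≠ i)
    (he : lam (vx w l m) = lam (vx w l i)) : psi lam d (w, l, i) = (w, l, m) := by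
  have hex : ∃ m ≤ d, m ≠ i ∧ lam (vx w l m) = lam (vx w l i) := ⟨m, hm, hmi, he⟩
  unfold psi
  rw [dif_pos hex]
  have hc := hex.choose_spec
  have := (Om_aux h).2 _ hc.1 hc.2.1 m hm hmi (hc.2.2.trans he.symm)
  simp only
  rw [this]

theorem psi_par {n k : ℕ} {lam : Pt n → Lab n}
    (hcomp : ∀ x y : Pt n, (∀ i, |x i| ≤ k) → (∀ i, |y i| ≤ k) → (∀ i, |x i - y i| ≤ 1) →
      lam x ≠ ng (lam y)) (d : ℕ) :
    Even (Om_finite k lam d).toFinset.card ↔ Even (En_finite k lam d).toFinset.card := by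
  classical
  have key : ∀ w l i, (w, l, i) ∈ Om k lam d → lam (vx w l i) ∈ l →
      ∃ m ≤ d, m ≠ i ∧ lam (vx w l m) = lam (vx w l i) ∧ (w, l, m) ∈ Om k lam d := by
    rintro w l i h hin
    obtain ⟨hv, hd, hi, hl⟩ := h
    obtain ⟨m, hm, hmi, he⟩ := hl _ hin
    refine ⟨m, hm, hmi, he, hv, hd, hm, fun a ha => ?_⟩
    obtain ⟨m', hm', hmi', he'⟩ := hl a ha
    by_cases hmm : m' = m
    · subst hmm
      exact ⟨i, hi, fun h => hmi h.symm, he.symm.trans he'⟩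
    · exact ⟨m', hm', hmm, he'⟩
  apply parity_step _ _ (fun p => lam (vx p.1 p.2.1 p.2.2) ∉ p.2.1) (psi lam d)
  · rintro ⟨w, l, i⟩ h hP
    rw [Set.Finite.mem_toFinset] at h ⊢
    obtain ⟨m, hm, hmi, he, hO⟩ := key w l i h (not_not.1 hP)
    rwa [psi_spec h m hm hmi he]
  · rintro ⟨w, l, i⟩ h hP
    rw [Set.Finite.mem_toFinset] at h
    obtain ⟨m, hm, hmi, he, hO⟩ := key w l i h (not_not.1 hP)
    rw [psi_spec h m hm hmi he]
    simp only at hP ⊢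
    rwa [he]
  · rintro ⟨w, l, i⟩ h hP
    rw [Set.Finite.mem_toFinset] at h
    obtain ⟨m, hm, hmi, he, hO⟩ := key w l i h (not_not.1 hP)
    rw [psi_spec h m hm hmi he, psi_spec hO i h.2.2.1 hmi.symm he.symm]
  · rintro ⟨w, l, i⟩ h hP
    rw [Set.Finite.mem_toFinset] at h
    obtain ⟨m, hm, hmi, he, hO⟩ := key w l i h (not_not.1 hP)
    rw [psi_spec h m hm hmi he]
    intro hh
    simp at hh
    exact hmi hh
  · refine Finset.card_bij (fun p _ => (p.1, p.2.1, lam (vx p.1 p.2.1 p.2.2))) ?_ ?_ ?_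
    · rintro ⟨w, l, i⟩ h
      rw [Finset.mem_filter, Set.Finite.mem_toFinset] at h
      rw [Set.Finite.mem_toFinset]
      obtain ⟨⟨hv, hd, hi, hl⟩, hP⟩ := h
      simp only at hv hd hi hl hP
      refine ⟨hv, hd, ?_, ?_⟩
      · simp only
        intro hmem
        obtain ⟨b, hb, hbe⟩ := List.mem_map.1 hmem
        rcases eq_or_ng _ _ hbe.symm with h | h
        · exact hP (h ▸ hb)
        · obtain ⟨m, hm, hmi, he⟩ := hl b hb
          rw [← he] at h
          exact hcomp _ _ (vx_bd hv i) (vx_bd hv m) (vx_adj hv i m) h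
      · intro a ha
        rcases List.mem_cons.1 ha with rfl | ha
        · exact ⟨i, hi, rfl⟩
        · obtain ⟨m, hm, hmi, he⟩ := hl a ha
          exact ⟨m, hm, he⟩
    · rintro ⟨w, l, i⟩ h ⟨w', l', i'⟩ h' e
      rw [Finset.mem_filter, Set.Finite.mem_toFinset] at h h'
      simp only [Prod.mk.injEq] at e
      obtain ⟨rfl, rfl, e⟩ := e
      by_cases hii : i' = i
      · rw [hii]
      · exfalso
        have := (Om_aux h.1).1 i' h'.1.2.2.1 hii
        exact h'.2 this
    · rintro ⟨w, l, a⟩ h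
      rw [Set.Finite.mem_toFinset] at h
      obtain ⟨hv, hd, hal, hl⟩ := h
      simp only at hv hd hal hl
      obtain ⟨i, hi, hia⟩ := hl a (by simp)
      have hal' : a ∉ l := fun h => hal (List.mem_map_of_mem h)
      refine ⟨(w, l, i), ?_, ?_⟩
      · rw [Finset.mem_filter, Set.Finite.mem_toFinset]
        refine ⟨⟨hv, hd, hi, ?_⟩, ?_⟩
        · intro b hb
          obtain ⟨m, hm, he⟩ := hl b (List.mem_cons_of_mem _ hb)
          refine ⟨m, hm, ?_, he⟩
          rintro rfl
          exact hal' (by rw [← hia, he]; exact hb)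
        · simp only [hia]; exact hal'
      · simp only [hia]

def phi {n : ℕ} (k : ℕ) (p : Pt n × List (Lab n) × ℕ) : Pt n × List (Lab n) × ℕ :=
  if p.2.2 = 0 then
    match p.2.1 with
    | [] => p
    | a :: t => if sg a * p.1 a.1 + 2 ≤ k then (p.1 + dir a, t ++ [a], t.length + 1)
        else (- p.1, (a :: t).map ng, 0)
  else if p.2.2 = p.2.1.length then
    match p.2.1.getLast? with
    | none => p
    | some a => (p.1 - dir a, a :: p.2.1.dropLast, 0)
  else (p.1, sw (p.2.2 - 1) p.2.1, p.2.2)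

theorem phi_rot {n k : ℕ} (w : Pt n) (a : Lab n) (t : List (Lab n))
    (h : sg a * w a.1 + 2 ≤ k) : phi k (w, a :: t, 0) = (w + dir a, t ++ [a], t.length + 1) := by
  simp [phi, h]
theorem phi_neg {n k : ℕ} (w : Pt n) (a : Lab n) (t : List (Lab n))
    (h : ¬ sg a * w a.1 + 2 ≤ k) : phi k (w, a :: t, 0) = (-w, (a :: t).map ng, 0) := by
  simp only [phi, if_true, if_neg h]
theorem phi_inv {n k : ℕ} (w : Pt n) (a : Lab n) (t : List (Lab n)) :
    phi k (w, t ++ [a], t.length + 1) = (w - dir a, a :: t, 0) := by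
  simp [phi]
theorem phi_sw {n k : ℕ} (w : Pt n) (l : List (Lab n)) (i : ℕ) (h : i + 1 ≠ l.length) :
    phi k (w, l, i + 1) = (w, sw i l, i + 1) := by
  simp [phi, h]

theorem Om_rot {n k d : ℕ} {lam : Pt n → Lab n} {w : Pt n} {a : Lab n} {t : List (Lab n)}
    (h : sg a * w a.1 + 2 ≤ k) (h0 : 0 ≤ sg a * w a.1) :
    (w, a :: t, 0) ∈ Om k lam d ↔ (w + dir a, t ++ [a], t.length + 1) ∈ Om k lam d := by
  have hp : (t ++ [a]).Perm (a :: t) := List.perm_append_singleton a t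
  have hval : Val k w (a :: t) ↔ Val k (w + dir a) (t ++ [a]) := by
    have hne : ∀ b ∈ t, ((a :: t).map Prod.fst).Nodup → (w + dir a) b.1 = w b.1 := by
      intro b hb hnd
      simp only [List.map_cons, List.nodup_cons] at hnd
      rw [Pi.add_apply, dir_ne _ _ (fun h => hnd.1 (h ▸ List.mem_map_of_mem hb)), add_zero]
    have hz : ∀ i, i ∉ (a :: t).map Prod.fst → (w + dir a) i = w i := by
      intro i hi
      simp only [List.map_cons, List.mem_cons, not_or] at hi
      rw [Pi.add_apply, dir_ne _ _ hi.1, add_zero]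
    have ha : sg a * (w + dir a) a.1 = sg a * w a.1 + 1 := by
      rw [Pi.add_apply, mul_add, sg_dir]
    constructor
    · intro hv
      refine Val.perm ⟨hv.nd, ?_, ?_, fun i hi => by rw [hz i hi, hv.z i hi]⟩ hp
      · intro b hb
        rcases List.mem_cons.1 hb with rfl | hb'
        · rw [ha]; omega
        · rw [hne b hb' hv.nd]; exact hv.lo b hb
      · intro b hb
        rcases List.mem_cons.1 hb with rfl | hb'
        · rw [ha]; omega
        · rw [hne b hb' hv.nd]; exact hv.hi b hb
    · intro hv
      replace hv := hv.perm hp.symm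
      refine ⟨hv.nd, ?_, ?_, fun i hi => by rw [← hz i hi, hv.z i hi]⟩
      · intro b hb
        rcases List.mem_cons.1 hb with rfl | hb'
        · exact h0
        · rw [← hne b hb' hv.nd]; exact hv.lo b hb
      · intro b hb
        rcases List.mem_cons.1 hb with rfl | hb'
        · omega
        · rw [← hne b hb' hv.nd]; exact hv.hi b hb
  simp only [Om, Set.mem_ofPred_eq, hval]
  refine and_congr_right fun hv => ?_
  have hlen : (t ++ [a]).length = (a :: t).length := hp.length_eq
  rw [hlen]
  refine and_congr_right fun hd => ?_
  simp only [List.length_cons] at hd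
  refine and_congr (by omega) ?_
  constructor
  · intro H b hb
    obtain ⟨m, hm, hm0, he⟩ := H b (hp.mem_iff.1 hb)
    refine ⟨m - 1, by omega, by omega, ?_⟩
    rw [vx_rot _ _ _ _ (by omega), Nat.sub_add_cancel (by omega)]
    exact he
  · intro H b hb
    obtain ⟨m, hm, hm0, he⟩ := H b (hp.mem_iff.2 hb)
    refine ⟨m + 1, by omega, by omega, ?_⟩
    rw [vx_rot _ _ _ _ (by omega)] at he
    exact he

theorem Om_sw {n k d : ℕ} {lam : Pt n → Lab n} {w : Pt n} {l : List (Lab n)} {i : ℕ}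
    (h : (w, l, i + 1) ∈ Om k lam d) : (w, sw i l, i + 1) ∈ Om k lam d := by
  obtain ⟨hv, hd, hi, hl⟩ := h
  refine ⟨hv.perm (sw_perm i l), (sw_perm i l).length_eq.trans hd, hi, fun a ha => ?_⟩
  obtain ⟨m, hm, hmi, he⟩ := hl a ((sw_perm i l).mem_iff.1 ha)
  refine ⟨m, hm, hmi, ?_⟩
  simp only [vx] at he ⊢
  rw [sw_take i m l hmi, he]

theorem Om_neg {n k d : ℕ} {lam : Pt n → Lab n}
    (hanti : ∀ x : Pt n, (∀ i, |x i| ≤ k) → (∃ i, |x i| = k) → lam (-x) = ng (lam x))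
    {w : Pt n} {a : Lab n} {t : List (Lab n)} (hn : ¬ sg a * w a.1 + 2 ≤ k)
    (h : (w, a :: t, 0) ∈ Om k lam d) : (-w, (a :: t).map ng, 0) ∈ Om k lam d := by
  obtain ⟨hv, hd, hi, hl⟩ := h
  simp only at hv hd hi hl
  have hfst : ∀ l : List (Lab n), (l.map ng).map Prod.fst = l.map Prod.fst := by
    intro l; rw [List.map_map]; rfl
  have hs : ∀ b : Lab n, sg (ng b) * (-w) (ng b).1 = sg b * w b.1 := by
    intro b; rw [sg_ng]; simp [ng]
  refine ⟨⟨by rw [hfst]; exact hv.nd, ?_, ?_, ?_⟩, by simpa using hd, hi, ?_⟩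
  · intro b hb
    obtain ⟨c, hc, rfl⟩ := List.mem_map.1 hb
    rw [hs]; exact hv.lo c hc
  · intro b hb
    obtain ⟨c, hc, rfl⟩ := List.mem_map.1 hb
    rw [hs]; exact hv.hi c hc
  · intro i hi
    rw [hfst] at hi
    simp [hv.z i hi]
  · intro b hb
    obtain ⟨c, hc, rfl⟩ := List.mem_map.1 hb
    obtain ⟨m, hm, hmi, he⟩ := hl c hc
    refine ⟨m, hm, hmi, ?_⟩
    simp only
    rw [vx_neg, hanti _ (vx_bd hv m), he]
    refine ⟨a.1, ?_⟩
    have hva : sg a * vx w (a :: t) m a.1 = k := by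
      obtain ⟨m, rfl⟩ := Nat.exists_eq_succ_of_ne_zero hmi
      have hhi := hv.hi a (by simp)
      have hnd := hv.nd
      simp only [List.map_cons, List.nodup_cons] at hnd
      rw [Nat.succ_eq_add_one]
      have h3 : ((t.take m).map dir).sum a.1 = 0 := by
        have hsub : ((t.take m).map Prod.fst).Sublist (t.map Prod.fst) :=
          (List.take_sublist m t).map _
        exact (sum_dir _ (hnd.2.sublist hsub)).1 _ (fun h => hnd.1 (hsub.subset h))
      simp only [vx, List.take_succ_cons, List.map_cons, List.sum_cons, Pi.add_apply, h3, mul_add,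
        sg_dir]
      omega
    have hsa : |sg a| = 1 := by unfold sg; split <;> simp
    have : |sg a * vx w (a :: t) m a.1| = k := by rw [hva]; simp
    rwa [abs_mul, hsa, one_mul] at this

theorem phi_par {n k : ℕ} (hk : 1 ≤ k) {lam : Pt n → Lab n}
    (hanti : ∀ x : Pt n, (∀ i, |x i| ≤ k) → (∃ i, |x i| = k) → lam (-x) = ng (lam x)) (d : ℕ) :
    Even (Om_finite k lam (d+1)).toFinset.card ↔ Even (En_finite k lam d).toFinset.card := by
  classical
  let P : Pt n × List (Lab n) × ℕ → Prop :=
    fun p => ∃ t a, p.2.1 = t ++ [a] ∧ p.2.2 = d + 1 ∧ p.1 a.1 = 0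
  -- description of the involution
  have key : ∀ p ∈ Om k lam (d+1), ¬ P p → phi k p ∈ Om k lam (d+1) ∧ ¬ P (phi k p) ∧
      phi k (phi k p) = p ∧ phi k p ≠ p := by
    rintro ⟨w, l, i⟩ h hP
    have hd : l.length = d + 1 := h.2.1
    rcases i with _ | i
    · rcases l with _ | ⟨a, t⟩
      · simp at hd
      have h0 : 0 ≤ sg a * w a.1 := h.1.lo a (by simp)
      have htl : t.length = d := by simpa using hd
      by_cases hc : sg a * w a.1 + 2 ≤ k
      · rw [phi_rot w a t hc, phi_inv]
        refine ⟨(Om_rot hc h0).1 h, ?_, by simp, by simp⟩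
        rintro ⟨t', a', he, -, hz⟩
        simp only at he hz
        have := (List.append_inj' he (by simp)).2
        simp only [List.cons.injEq, and_true] at this
        subst this
        have h1 : sg a * (w + dir a) a.1 = sg a * w a.1 + 1 := by
          rw [Pi.add_apply, mul_add, sg_dir]
        rw [hz] at h1
        omega
      · rw [phi_neg w a t hc]
        refine ⟨Om_neg hanti hc h, ?_, ?_, ?_⟩
        · rintro ⟨t', a', -, he, -⟩
          simp at he
        · rw [List.map_cons, phi_neg]
          · simp [ng_ng, Function.comp_def]
          · rw [sg_ng]; simpa [ng] using hc
        · intro hh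
          simp only [List.map_cons, Prod.mk.injEq, List.cons.injEq] at hh
          exact ng_ne a hh.2.1.1
    · by_cases hi : i + 1 = l.length
      · obtain ⟨t, a, rfl⟩ : ∃ t a, l = t ++ [a] := by
          rcases List.eq_nil_or_concat l with rfl | ⟨t, a, rfl⟩
          · simp at hd
          · exact ⟨t, a, by simp⟩
        have hit : i = t.length := by simpa using hi
        subst hit
        have htl : t.length = d := by simpa using hd
        have hlo := h.1.lo a (by simp)
        have hhi := h.1.hi a (by simp)
        simp only at hlo hhi
        have hwa : w a.1 ≠ 0 := by
          intro hw
          exact hP ⟨t, a, rfl, by simp [htl], hw⟩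
        have hsw : sg a * w a.1 ≠ 0 := by
          refine mul_ne_zero ?_ hwa
          intro h0
          have := sg_mul a
          rw [h0] at this
          simp at this
        have h1 : sg a * (w - dir a) a.1 = sg a * w a.1 - 1 := by
          rw [Pi.sub_apply, mul_sub, sg_dir]
        have hc : sg a * (w - dir a) a.1 + 2 ≤ k := by omega
        rw [phi_inv, phi_rot _ _ _ hc]
        refine ⟨?_, ?_, by simp, by simp⟩
        · rw [Om_rot hc (by omega)]
          simpa using h
        · rintro ⟨t', a', -, he, -⟩
          simp at he
      · rw [phi_sw w l i hi]
        have hlt : i + 1 < l.length := by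
          have : i + 1 ≤ d + 1 := h.2.2.1
          omega
        refine ⟨Om_sw h, ?_, ?_, ?_⟩
        · rintro ⟨t', a', -, he, -⟩
          simp only at he
          omega
        · rw [phi_sw _ _ _ (by rw [(sw_perm i l).length_eq]; exact hi), sw_sw]
        · intro hh
          simp only [Prod.mk.injEq, true_and, and_true] at hh
          exact sw_ne i l (List.Nodup.of_map _ h.1.nd) hlt hh
  apply parity_step _ _ P (phi k)
  · intro p hp hP
    rw [Set.Finite.mem_toFinset] at hp ⊢
    exact (key p hp hP).1
  · intro p hp hP
    rw [Set.Finite.mem_toFinset] at hp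
    exact (key p hp hP).2.1
  · intro p hp hP
    rw [Set.Finite.mem_toFinset] at hp
    exact (key p hp hP).2.2.1
  · intro p hp hP
    rw [Set.Finite.mem_toFinset] at hp
    exact (key p hp hP).2.2.2
  · symm
    refine Finset.card_bij (fun p _ => (p.1, p.2.1 ++ [p.2.2], d + 1)) ?_ ?_ ?_
    · rintro ⟨w, t, a⟩ h
      rw [Set.Finite.mem_toFinset] at h
      rw [Finset.mem_filter, Set.Finite.mem_toFinset]
      obtain ⟨hv, hd, hat, hl⟩ := h
      simp only at hv hd hat hl
      have hp : (t ++ [a]).Perm (a :: t) := List.perm_append_singleton a t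
      have hwa := hv.z a.1 hat
      refine ⟨⟨Val.perm ⟨?_, ?_, ?_, ?_⟩ hp, by simp [hd], le_rfl, ?_⟩, t, a, rfl, rfl, hwa⟩
      · rw [List.map_cons, List.nodup_cons]; exact ⟨hat, hv.nd⟩
      · intro b hb
        rcases List.mem_cons.1 hb with rfl | hb
        · simp [hwa]
        · exact hv.lo b hb
      · intro b hb
        rcases List.mem_cons.1 hb with rfl | hb
        · simp [hwa]; omega
        · exact hv.hi b hb
      · intro i hi
        simp only [List.map_cons, List.mem_cons, not_or] at hi
        exact hv.z i hi.2
      · intro b hb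
        obtain ⟨m, hm, he⟩ := hl b (hp.mem_iff.1 hb)
        refine ⟨m, by omega, by simp only; omega, ?_⟩
        simp only
        rw [vx_app _ _ _ _ (by omega), he]
    · rintro ⟨w, t, a⟩ h ⟨w', t', a'⟩ h' e
      simp only [Prod.mk.injEq, and_true] at e
      obtain ⟨rfl, e⟩ := e
      obtain ⟨rfl, e2⟩ := List.append_inj' e (by simp)
      simp only [List.cons.injEq, and_true] at e2
      rw [e2]
    · rintro ⟨w, l, i⟩ h
      rw [Finset.mem_filter, Set.Finite.mem_toFinset] at h
      obtain ⟨⟨hv, hd, hi, hl⟩, t, a, rfl, rfl, hwa⟩ := h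
      simp only at hv hd hi hl hwa
      have hp : (t ++ [a]).Perm (a :: t) := List.perm_append_singleton a t
      replace hv := hv.perm hp.symm
      have hnd := hv.nd
      rw [List.map_cons, List.nodup_cons] at hnd
      have htl : t.length = d := by simpa using hd
      refine ⟨(w, t, a), ?_, rfl⟩
      rw [Set.Finite.mem_toFinset]
      refine ⟨⟨hnd.2, fun b hb => hv.lo b (by simp [hb]), fun b hb => hv.hi b (by simp [hb]), ?_⟩,
        htl, hnd.1, ?_⟩
      · intro i hi
        by_cases hia : i = a.1
        · rw [hia]; exact hwa
        · exact hv.z i (by simp only [List.map_cons, List.mem_cons, not_or]; exact ⟨hia, hi⟩)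
      · intro b hb
        obtain ⟨m, hm, hm', he⟩ := hl b (hp.mem_iff.2 hb)
        rw [vx_app _ _ _ _ (by omega)] at he
        exact ⟨m, by omega, he⟩

theorem tucker {n k : ℕ} (hk : 1 ≤ k) (lam : Pt n → Lab n)
    (hanti : ∀ x : Pt n, (∀ i, |x i| ≤ k) → (∃ i, |x i| = k) → lam (-x) = ng (lam x)) :
    ∃ x y : Pt n, (∀ i, |x i| ≤ k) ∧ (∀ i, |y i| ≤ k) ∧ (∀ i, |x i - y i| ≤ 1) ∧
      lam x = ng (lam y) := by
  classical
  by_contra hcon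
  have hcomp : ∀ x y : Pt n, (∀ i, |x i| ≤ k) → (∀ i, |y i| ≤ k) → (∀ i, |x i - y i| ≤ 1) →
      lam x ≠ ng (lam y) := fun x y h1 h2 h3 h4 => hcon ⟨x, y, h1, h2, h3, h4⟩
  have hodd : ∀ d, ¬ Even (En_finite k lam d).toFinset.card := by
    intro d
    induction d with
    | zero =>
      have : (En_finite k lam 0).toFinset = {(0, [], lam 0)} := by
        ext ⟨w, l, a⟩
        rw [Set.Finite.mem_toFinset, Finset.mem_singleton]
        constructor
        · rintro ⟨hv, hd, hal, hl⟩
          simp only at hv hd hal hl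
          obtain rfl := List.length_eq_zero_iff.1 hd
          have hw : w = 0 := by ext i; exact hv.z i (by simp)
          subst hw
          obtain ⟨m, hm, he⟩ := hl a (by simp)
          simp [vx] at he
          simp [he]
        · intro h
          simp only [Prod.mk.injEq] at h
          obtain ⟨rfl, rfl, rfl⟩ := h
          refine ⟨⟨by simp, by simp, by simp, by simp⟩, rfl, by simp, ?_⟩
          intro a ha
          refine ⟨0, le_rfl, ?_⟩
          simp at ha
          simp [vx, ha]
      rw [this]; simp
    | succ d ih =>
      rw [← psi_par hcomp, phi_par hk hanti]; exact ih
  apply hodd n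
  have : (En_finite k lam n).toFinset = ∅ := by
    rw [Finset.eq_empty_iff_forall_notMem]
    rintro ⟨w, l, a⟩ h
    rw [Set.Finite.mem_toFinset] at h
    obtain ⟨hv, hd, hal, -⟩ := h
    simp only at hv hd hal
    have hnd : (a.1 :: l.map Prod.fst).Nodup := List.nodup_cons.2 ⟨hal, hv.nd⟩
    have := hnd.length_le_card
    simp [hd] at this
  rw [this]; simp
end BU
namespace BU

theorem ball_zero {n : ℕ} (g : (Fin n → ℝ) → (Fin n → ℝ))
    (hg : ContinuousOn g (Metric.closedBall 0 1))
    (hodd : ∀ x, ‖x‖ = 1 → g (-x) = - g x) : ∃ x, ‖x‖ ≤ 1 ∧ g x = 0 := by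
  classical
  by_contra hcon
  have hne : ∀ x, ‖x‖ ≤ 1 → g x ≠ 0 := fun x hx h => hcon ⟨x, hx, h⟩
  have hcpt : IsCompact (Metric.closedBall (0 : Fin n → ℝ) 1) := isCompact_closedBall 0 1
  have hn : Nonempty (Fin n) := by
    by_contra hn
    rw [not_nonempty_iff] at hn
    exact hne 0 (by simp) (Subsingleton.elim _ _)
  obtain ⟨x0, hx0, hmin⟩ := hcpt.exists_isMinOn ⟨0, by simp⟩ hg.norm
  set δ := ‖g x0‖ with hδ
  have hδ0 : 0 < δ := norm_pos_iff.2 (hne x0 (by simpa using hx0))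
  have hge : ∀ x, ‖x‖ ≤ 1 → ∃ i, δ ≤ |g x i| := by
    intro x hx
    by_contra hh
    push Not at hh
    have h1 : δ ≤ ‖g x‖ := hmin (by simpa using hx)
    have h2 : ‖g x‖ < δ := (pi_norm_lt_iff hδ0).2 (fun i => by simpa using hh i)
    linarith
  have huc := hcpt.uniformContinuousOn_of_continuous hg
  rw [Metric.uniformContinuousOn_iff] at huc
  obtain ⟨η, hη, huc⟩ := huc δ hδ0
  obtain ⟨k', hk'⟩ := exists_nat_one_div_lt hη
  set k := k' + 1 with hk
  have hkpos : (0 : ℝ) < k := by rw [hk]; positivity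
  have hkη : (1 : ℝ) / k < η := by rw [hk]; push_cast; exact hk'
  let sc : Pt n → (Fin n → ℝ) := fun x i => (x i : ℝ) / k
  have hsc : ∀ x : Pt n, (∀ i, |x i| ≤ k) → ‖sc x‖ ≤ 1 := by
    intro x hx
    rw [pi_norm_le_iff_of_nonneg zero_le_one]
    intro i
    simp only [sc, Real.norm_eq_abs, abs_div, Nat.abs_cast]
    rw [div_le_one hkpos]
    exact_mod_cast hx i
  have hscn : ∀ x : Pt n, sc (-x) = - sc x := by
    intro x; ext i; simp [sc, neg_div]
  let idx : (Fin n → ℝ) → Fin n := fun h =>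
    if hh : ∃ i, δ ≤ h i then hh.choose else hn.some
  have hidx : ∀ h : Fin n → ℝ, (∃ i, δ ≤ h i) → δ ≤ h (idx h) := by
    intro h hh
    simp only [idx, dif_pos hh]
    exact hh.choose_spec
  let ix : Pt n → Fin n := fun x => idx (fun i => |g (sc x) i|)
  have hix : ∀ x : Pt n, (∀ i, |x i| ≤ k) → δ ≤ |g (sc x) (ix x)| := fun x hx =>
    hidx (fun i => |g (sc x) i|) (hge _ (hsc x hx))
  let lam : Pt n → Lab n := fun x => (ix x, decide (0 < g (sc x) (ix x)))
  obtain ⟨x, y, hx, hy, hxy, he⟩ := tucker (k := k) (by omega) lam (by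
    rintro x hx ⟨i, hi⟩
    have h1 : ‖sc x‖ = 1 := by
      refine le_antisymm (hsc x hx) ?_
      have h2 := norm_le_pi_norm (sc x) i
      have h3 : ‖sc x i‖ = 1 := by
        simp only [sc, Real.norm_eq_abs, abs_div, Nat.abs_cast]
        rw [div_eq_one_iff_eq hkpos.ne']
        exact_mod_cast hi
      rwa [h3] at h2
    have h2 : g (sc (-x)) = - g (sc x) := by rw [hscn, hodd _ h1]
    have h3 : ix (-x) = ix x := by
      simp only [ix, h2, Pi.neg_apply, abs_neg]
    have h4 := hix x hx
    simp only [lam, ng, h3, h2, Pi.neg_apply, Prod.mk.injEq, true_and]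
    rcases lt_trichotomy (g (sc x) (ix x)) 0 with h | h | h
    · simp [h, h.le]
    · rw [h] at h4; simp at h4; linarith
    · simp [h, h.le])
  have h1 := hix x hx
  have h2 := hix y hy
  simp only [lam, ng, Prod.mk.injEq] at he
  obtain ⟨e1, e2⟩ := he
  rw [e1] at e2 h1
  have hd : dist (sc x) (sc y) < η := by
    refine lt_of_le_of_lt ?_ hkη
    rw [dist_pi_le_iff (by positivity)]
    intro i
    simp only [sc, Real.dist_eq]
    rw [← sub_div, abs_div, Nat.abs_cast]
    gcongr
    exact_mod_cast hxy i
  have h3 := huc (sc x) (by simpa using hsc x hx) (sc y) (by simpa using hsc y hy) hd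
  have h4 := lt_of_le_of_lt (dist_le_pi_dist (g (sc x)) (g (sc y)) (ix y)) h3
  rw [Real.dist_eq, abs_lt] at h4
  by_cases hp : 0 < g (sc y) (ix y)
  · have hq : ¬ 0 < g (sc x) (ix y) := by simpa [hp] using e2
    rw [abs_of_pos hp] at h2
    rw [abs_of_nonpos (not_lt.1 hq)] at h1
    linarith
  · have hq : 0 < g (sc x) (ix y) := by simpa [hp] using e2
    rw [abs_of_nonpos (not_lt.1 hp)] at h2
    rw [abs_of_pos hq] at h1
    linarith

end BU
namespace BU
open MeasureTheory

theorem jord {X : Type*} [MeasurableSpace X] (s : SignedMeasure X) :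
    s = s.toJordanDecomposition.posPart.toSignedMeasure
      - s.toJordanDecomposition.negPart.toSignedMeasure := by
  conv_lhs => rw [← SignedMeasure.toSignedMeasure_toJordanDecomposition s]
  rfl

theorem sint_eq {X : Type*} [MetricSpace X] [CompactSpace X] [MeasurableSpace X] [BorelSpace X]
    (s : SignedMeasure X) (μ ν : Measure X) [IsFiniteMeasure μ] [IsFiniteMeasure ν]
    (h : s = μ.toSignedMeasure - ν.toSignedMeasure) (g : C(X, ℝ)) :
    sint s (fun x => g x) = ∫ x, g x ∂μ - ∫ x, g x ∂ν := by
  have hint : ∀ (m : Measure X) [IsFiniteMeasure m], Integrable (fun x => g x) m := by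
    intro m _
    exact (BoundedContinuousFunction.mkOfCompact g).integrable m
  set p := s.toJordanDecomposition.posPart
  set q := s.toJordanDecomposition.negPart
  have hs : s = p.toSignedMeasure - q.toSignedMeasure := jord s
  have hm : p + ν = μ + q := by
    have h1 : (p + ν).toSignedMeasure = (μ + q).toSignedMeasure := by
      rw [Measure.toSignedMeasure_add, Measure.toSignedMeasure_add]
      exact sub_eq_sub_iff_add_eq_add.1 (hs.symm.trans h)
    exact Measure.toSignedMeasure_eq_toSignedMeasure_iff.1 h1
  have h2 : ∫ x, g x ∂(p + ν) = ∫ x, g x ∂(μ + q) := by rw [hm]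
  rw [integral_add_measure (hint _) (hint _), integral_add_measure (hint _) (hint _)] at h2
  unfold sint
  simp only [p, q] at h2 ⊢
  linarith

theorem sint_add {X : Type*} [MetricSpace X] [CompactSpace X] [MeasurableSpace X] [BorelSpace X]
    (s t : SignedMeasure X) (g : C(X, ℝ)) :
    sint (s + t) (fun x => g x) = sint s (fun x => g x) + sint t (fun x => g x) := by
  have hint : ∀ (m : Measure X) [IsFiniteMeasure m], Integrable (fun x => g x) m := by
    intro m _
    exact (BoundedContinuousFunction.mkOfCompact g).integrable m
  rw [sint_eq (s + t) (s.toJordanDecomposition.posPart + t.toJordanDecomposition.posPart)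
    (s.toJordanDecomposition.negPart + t.toJordanDecomposition.negPart) ?_ g,
    integral_add_measure (hint _) (hint _), integral_add_measure (hint _) (hint _)]
  · unfold sint; ring
  · rw [Measure.toSignedMeasure_add, Measure.toSignedMeasure_add]
    conv_lhs => rw [jord s, jord t]
    abel

theorem sint_smul {X : Type*} [MetricSpace X] [CompactSpace X] [MeasurableSpace X] [BorelSpace X]
    (a : ℝ) (s : SignedMeasure X) (g : C(X, ℝ)) :
    sint (a • s) (fun x => g x) = a * sint s (fun x => g x) := by
  have nsub : ∀ (a : NNReal) (s t : SignedMeasure X), a • (s - t) = a • s - a • t := by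
    intro a s t; ext i; simp [mul_sub, NNReal.smul_def]
  have hpos : ∀ (a : NNReal) (s : SignedMeasure X),
      sint (a • s) (fun x => g x) = a * sint s (fun x => g x) := by
    intro a s
    rw [sint_eq (a • s) (a • s.toJordanDecomposition.posPart)
      (a • s.toJordanDecomposition.negPart) ?_ g]
    · rw [integral_smul_nnreal_measure, integral_smul_nnreal_measure]
      unfold sint
      simp only [NNReal.smul_def, smul_eq_mul]
      ring
    · rw [Measure.toSignedMeasure_smul, Measure.toSignedMeasure_smul, ← nsub]
      exact congrArg _ (jord s)
  have hneg : ∀ s : SignedMeasure X, sint (-s) (fun x => g x) = - sint s (fun x => g x) := by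
    intro s
    have h0 : sint (0 : SignedMeasure X) (fun x => g x) = 0 := by
      have := hpos 0 0
      simpa using this
    have := sint_add s (-s) g
    rw [add_neg_cancel, h0] at this
    linarith
  rcases le_total 0 a with h | h
  · exact hpos ⟨a, h⟩ s
  · have h1 := hpos (-a).toNNReal s
    have hc : ((-a).toNNReal : ℝ) = -a := Real.coe_toNNReal _ (by linarith)
    have h2 : a • s = - ((-a).toNNReal • s) := by
      ext i; simp [NNReal.smul_def, hc]
    rw [h2, hneg, h1, hc]
    ring

/-- Linear maps from finite-dimensional coordinate spaces are weak-star continuous. -/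
theorem cont_lin {X : Type*} [MetricSpace X] [CompactSpace X] [MeasurableSpace X] [BorelSpace X]
    {m : ℕ} (F : (Fin m → ℝ) →ₗ[ℝ] SignedMeasure X) :
    @Continuous _ _ _ (wstar X) F := by
  rw [wstar, continuous_induced_rng]
  refine continuous_pi fun g => ?_
  let L : (Fin m → ℝ) →ₗ[ℝ] ℝ :=
    { toFun := fun x => sint (F x) (fun y => g y)
      map_add' := fun x y => by simp only [map_add, sint_add]
      map_smul' := fun a x => by simp only [map_smul, sint_smul, RingHom.id_apply, smul_eq_mul] }
  exact L.continuous_of_finiteDimensional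

end BU

theorem stmt_15 {X : Type*} [MetricSpace X] [CompactSpace X] [MeasurableSpace X] [BorelSpace X]
    (N : SignedMeasure X → ℝ)
    (hN1 : ∀ s t, N (s + t) ≤ N s + N t)
    (hN2 : ∀ (a : ℝ) (s : SignedMeasure X), N (a • s) = |a| * N s)
    (hN3 : ∀ s, N s = 0 → s = 0)
    (K : Set (SignedMeasure X))
    (hKc : @IsCompact _ (wstar X) K)
    (hsym : ∀ s ∈ K, -s ∈ K) (hconv : Convex ℝ K)
    (hNcont : @ContinuousOn _ _ (wstar X) _ N K)
    (M : ℕ) (Y : Submodule ℝ (SignedMeasure X)) (hY : Module.finrank ℝ Y = M + 1)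
    (ρ : ℝ) (hρ : 0 < ρ)
    (hYK : ∀ s ∈ Y, N s ≤ ρ → s ∈ K)
    (S : SignedMeasure X → (Fin M → ℝ))
    (hS : @ContinuousOn _ _ (wstar X) _ S K)
    (A : (Fin M → ℝ) → SignedMeasure X) :
    ∃ s ∈ K, ρ ≤ N (A (S s) - s) := by
  have hfree : Module.Free ℝ Y := @Module.Free.of_divisionRing ℝ Y _ _ _
  have hfd : Module.Finite ℝ Y := Module.finite_of_finrank_pos (by omega)
  let b := Module.finBasisOfFinrankEq ℝ Y hY
  let F : (Fin (M+1) → ℝ) →ₗ[ℝ] SignedMeasure X := Y.subtype ∘ₗ b.equivFun.symm.toLinearMap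
  have hFinj : Function.Injective F := by
    intro x y h
    exact b.equivFun.symm.injective (Subtype.ext h)
  have hFY : ∀ x, F x ∈ Y := fun x => (b.equivFun.symm x).2
  have hFc := BU.cont_lin F
  have hNneg : ∀ s, N (-s) = N s := by
    intro s
    have h1 : (-1 : ℝ) • s = -s := by ext i; simp
    have := hN2 (-1) s
    rw [h1] at this
    simpa using this
  have hN0 : N 0 = 0 := by have := hN2 0 0; simpa using this
  have hNnn : ∀ s, 0 ≤ N s := by
    intro s
    have := hN1 s (-s)
    rw [add_neg_cancel, hN0, hNneg] at this
    linarith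
  -- continuity of the norm on coordinates
  let P : Seminorm ℝ (Fin (M+1) → ℝ) := Seminorm.of (fun x => N (F x))
    (fun x y => by rw [map_add]; exact hN1 _ _)
    (fun a x => by rw [map_smul, hN2]; rfl)
  have hPc : Continuous (fun x => N (F x)) := by
    have : ContinuousOn P Set.univ := P.convexOn.continuousOn isOpen_univ
    exact continuousOn_univ.1 this
  have hPpos : ∀ x, x ≠ 0 → 0 < N (F x) := by
    intro x hx
    refine lt_of_le_of_ne (hNnn _) (fun h => hx ?_)
    exact hFinj (by rw [hN3 _ h.symm, map_zero])
  let c : (Fin M → ℝ) → (Fin (M+1) → ℝ) := fun x => Fin.snoc x (1 - ‖x‖)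
  have hcc : Continuous c := by
    refine Continuous.finSnoc (A := fun _ => ℝ) continuous_id (by fun_prop)
  have hc0 : ∀ x, c x ≠ 0 := by
    intro x h
    have h1 : ∀ i : Fin M, x i = 0 := by
      intro i
      have := congrFun h i.castSucc
      simpa [c] using this
    have hx : x = 0 := funext h1
    have := congrFun h (Fin.last M)
    simp [c, hx] at this
  have hcodd : ∀ x, ‖x‖ = 1 → c (-x) = - c x := by
    intro x hx
    ext i
    refine Fin.lastCases ?_ (fun j => ?_) i
    · simp [c, hx]
    · simp [c]
  let u : (Fin M → ℝ) → (Fin (M+1) → ℝ) := fun x => (ρ / N (F (c x))) • c x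
  have huc : Continuous u :=
    (continuous_const.div (hPc.comp hcc) (fun x => (hPpos _ (hc0 x)).ne')).smul hcc
  have hNu : ∀ x, N (F (u x)) = ρ := by
    intro x
    have h := hPpos _ (hc0 x)
    simp only [u, map_smul, hN2]
    rw [abs_of_pos (div_pos hρ h), div_mul_cancel₀ _ h.ne']
  have huK : ∀ x, F (u x) ∈ K := fun x => hYK _ (hFY _) (hNu x).le
  have huK' : ∀ x, F (- u x) ∈ K := fun x => hYK _ (hFY _) (by rw [map_neg, hNneg, hNu])
  have huodd : ∀ x, ‖x‖ = 1 → u (-x) = - u x := by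
    intro x hx
    simp only [u, hcodd x hx, map_neg, hNneg, smul_neg]
  have hg1 : Continuous (fun x => S (F (u x))) := by
    let _ := wstar X
    exact hS.comp_continuous (hFc.comp huc) huK
  have hg2 : Continuous (fun x => S (F (- u x))) := by
    let _ := wstar X
    exact hS.comp_continuous (hFc.comp huc.neg) huK'
  obtain ⟨x, -, hx⟩ := BU.ball_zero (fun x => S (F (u x)) - S (F (- u x)))
    (hg1.sub hg2).continuousOn (by
      intro x hx
      simp only [huodd x hx, neg_neg, neg_sub])
  have he : S (F (u x)) = S (F (- u x)) := sub_eq_zero.1 hx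
  by_contra hcon
  push Not at hcon
  have h1 := hcon _ (huK x)
  have h2 := hcon _ (huK' x)
  rw [← he, map_neg] at h2
  set s := F (u x) with hs
  set a := A (S s)
  have h3 := hN1 (a - -s) (-(a - s))
  have h4 : a - -s + -(a - s) = (2 : ℝ) • s := by rw [two_smul]; abel
  rw [h4, hN2, hNneg, hs, hNu x] at h3
  norm_num at h3
  rw [sub_neg_eq_add] at h2
  linarith
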